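/- For every random vector X = (X_1,…,X_n) of integrable random variables and every α ∈ (0,1), DQ^ES_α(X) = 0 if and only if X_1 + ⋯ + X_n ≤ Σ_{i=1}^n ES_α(X_i) almost surely. -/

import Mathlib

open MeasureTheory ProbabilityTheory Filter Set

namespace DQ

variable {Ω : Type*} [MeasurableSpace Ω]

/-- An atomless probability measure: every non-null measurable set has a measurable
subset of strictly smaller positive measure. -/
def Atomless (P : Measure Ω) : Prop :=
  ∀ A : Set Ω, MeasurableSet A → 0 < P A →
    ∃ B, MeasurableSet B ∧ B ⊆ A ∧ 0 < P B ∧ P B < P A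

/-- Value-at-Risk at level `α` (small-`α` convention):
`VaR_α(X) = inf {x | P(X ≤ x) ≥ 1 - α}`. -/
noncomputable def VaR (P : Measure Ω) (α : ℝ) (X : Ω → ℝ) : ℝ :=
  sInf {x : ℝ | 1 - α ≤ (P {ω | X ω ≤ x}).toReal}

/-- Expected Shortfall at level `α`: `ES_α(X) = (1/α) ∫_0^α VaR_β(X) dβ`. -/
noncomputable def ES (P : Measure Ω) (α : ℝ) (X : Ω → ℝ) : ℝ :=
  (1 / α) * ∫ β in Set.Ioo (0 : ℝ) α, VaR P β X

/-- `α* = inf {β ∈ (0,1) | VaR_β(∑ Xᵢ) ≤ ∑ VaR_α(Xᵢ)}`, with `inf ∅ = 1`. -/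
noncomputable def alphaStarVaR (P : Measure Ω) (α : ℝ) {n : ℕ} (X : Fin n → Ω → ℝ) : ℝ :=
  sInf ({β ∈ Set.Ioo (0 : ℝ) 1 |
    VaR P β (fun ω => ∑ i, X i ω) ≤ ∑ i, VaR P α (X i)} ∪ {1})

/-- Diversification quotient based on VaR: `DQ^VaR_α(X) = α*/α`. -/
noncomputable def DQVaR (P : Measure Ω) (α : ℝ) {n : ℕ} (X : Fin n → Ω → ℝ) : ℝ :=
  alphaStarVaR P α X / α

/-- `α* = inf {β ∈ (0,1) | ES_β(∑ Xᵢ) ≤ ∑ ES_α(Xᵢ)}`, with `inf ∅ = 1`. -/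
noncomputable def alphaStarES (P : Measure Ω) (α : ℝ) {n : ℕ} (X : Fin n → Ω → ℝ) : ℝ :=
  sInf ({β ∈ Set.Ioo (0 : ℝ) 1 |
    ES P β (fun ω => ∑ i, X i ω) ≤ ∑ i, ES P α (X i)} ∪ {1})

/-- Diversification quotient based on ES: `DQ^ES_α(X) = α*/α`. -/
noncomputable def DQES (P : Measure Ω) (α : ℝ) {n : ℕ} (X : Fin n → Ω → ℝ) : ℝ :=
  alphaStarES P α X / α

end DQ

/-!
Write `S = X₁ + ⋯ + Xₙ` and `c = ∑ᵢ ES_α(Xᵢ)`. The quotient vanishes exactly when `ES_β(S) ≤ c` for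
arbitrarily small `β > 0`. Since `β ↦ VaR_β(S)` is decreasing, `VaR_β(S) ≤ ES_β(S)`, so this gives
`VaR_γ(S) ≤ VaR_β(S) ≤ ES_β(S) ≤ c` for every `γ ∈ (0,1)`, taking such a `β < γ`; and
`VaR_γ(S) ≤ c` means `P(S ≤ c) ≥ 1 - γ`, whence `S ≤ c` almost surely. Conversely, if `S ≤ c` almost
surely then every `VaR_γ(S)`, and hence every average `ES_β(S)` of them, is at most `c`.
Integrability of `β ↦ VaR_β(S)` comes from the quantile transform: under the uniform distribution on
`(0,1)` it has the law of `S`.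
-/

open scoped Topology

namespace DQ

theorem sInf_Ioo_sep_union_one_eq_zero_iff {p : ℝ → Prop} :
    sInf ({β ∈ Ioo (0 : ℝ) 1 | p β} ∪ {1}) = 0 ↔ ∃ᶠ β in 𝓝[>] 0, p β := by
  have nonempty : ({β ∈ Ioo (0 : ℝ) 1 | p β} ∪ {1}).Nonempty := ⟨1, Or.inr rfl⟩
  have nonneg : ∀ β ∈ {β ∈ Ioo (0 : ℝ) 1 | p β} ∪ {1}, 0 ≤ β := by
    rintro β (⟨hβ, -⟩ | rfl)
    exacts [hβ.1.le, zero_le_one]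
  rw [(nhdsGT_basis (0 : ℝ)).frequently_iff]
  constructor
  · intro h ε hε
    obtain ⟨β, ⟨hβ, hpβ⟩ | rfl, hβε⟩ :=
      exists_lt_of_csInf_lt nonempty (h.trans_lt (lt_min hε one_pos))
    · exact ⟨β, ⟨hβ.1, hβε.trans_le (min_le_left _ _)⟩, hpβ⟩
    · exact absurd hβε (min_le_right _ _).not_gt
  · refine fun h ↦ le_antisymm (le_of_forall_gt fun ε hε ↦ ?_) (Real.sInf_nonneg nonneg)
    obtain ⟨β, hβ, hpβ⟩ := h (min ε 1) (lt_min hε one_pos)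
    obtain ⟨hβε, hβ1⟩ := lt_min_iff.1 hβ.2
    exact csInf_lt_of_lt ⟨0, nonneg⟩ (Or.inl ⟨⟨hβ.1, hβ1⟩, hpβ⟩) hβε

theorem volume_Ici_inter_Ioo {a b q : ℝ} (haq : a ≤ q) :
    volume (Ici q ∩ Ioo a b) = ENNReal.ofReal (b - q) := by
  calc volume (Ici q ∩ Ioo a b)
      = volume (Ioi q ∩ Ioo a b) := measure_congr (Ioi_ae_eq_Ici.symm.inter ae_eq_rfl)
    _ = volume (Ioo q b) := by rw [Ioi_inter_Ioo, sup_eq_left.2 haq]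
    _ = ENNReal.ofReal (b - q) := Real.volume_Ioo

theorem sInf_setOf_le_cdf_le_iff (μ : Measure ℝ) {p : ℝ} (hp : p ∈ Ioo (0 : ℝ) 1) (x : ℝ) :
    sInf {y | p ≤ cdf μ y} ≤ x ↔ p ≤ cdf μ x := by
  have bddBelow : BddBelow {y | p ≤ cdf μ y} := by
    obtain ⟨a, ha⟩ := ((tendsto_cdf_atBot μ).eventually_lt_const hp.1).exists
    exact ⟨a, fun y hy ↦ ((monotone_cdf μ).reflect_lt (ha.trans_le hy)).le⟩
  have nonempty : {y | p ≤ cdf μ y}.Nonempty := by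
    obtain ⟨b, hb⟩ := ((tendsto_cdf_atTop μ).eventually_const_lt hp.2).exists
    exact ⟨b, hb.le⟩
  refine ⟨fun h ↦ ?_, fun h ↦ csInf_le bddBelow h⟩
  have le_cdf_of_lt : ∀ y, x < y → p ≤ cdf μ y := fun y hy ↦ by
    obtain ⟨z, hz, hzy⟩ := exists_lt_of_csInf_lt nonempty (h.trans_lt hy)
    exact hz.trans (monotone_cdf μ hzy.le)
  have right_cont : Tendsto (cdf μ) (𝓝[>] x) (𝓝 (cdf μ x)) :=
    ((cdf μ).right_continuous x).mono_left (nhdsWithin_mono _ Ioi_subset_Ici_self)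
  exact ge_of_tendsto right_cont (eventually_mem_nhdsWithin.mono le_cdf_of_lt)

variable {Ω : Type*} [MeasurableSpace Ω] {P : Measure Ω} {X : Ω → ℝ}

theorem ES_eq_setAverage {β : ℝ} (hβ : 0 < β) :
    ES P β X = ⨍ γ in Ioo 0 β, VaR P γ X := by
  rw [ES, setAverage_eq, Real.volume_real_Ioo_of_le hβ.le, sub_zero, one_div, smul_eq_mul]

variable [IsProbabilityMeasure P]

theorem cdf_map_eq_real (hX : AEMeasurable X P) (x : ℝ) :
    cdf (P.map X) x = P.real {ω | X ω ≤ x} := by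
  have : IsProbabilityMeasure (P.map X) := Measure.isProbabilityMeasure_map hX
  rw [cdf_eq_real, map_measureReal_apply_of_aemeasurable hX measurableSet_Iic]
  rfl

theorem VaR_le_iff (hX : AEMeasurable X P) {β : ℝ} (hβ : β ∈ Ioo (0 : ℝ) 1) (x : ℝ) :
    VaR P β X ≤ x ↔ 1 - β ≤ P.real {ω | X ω ≤ x} := by
  have h := sInf_setOf_le_cdf_le_iff (P.map X) (Ioo.one_sub_mem hβ) x
  simp only [cdf_map_eq_real hX] at h
  exact h

theorem antitoneOn_VaR (hX : AEMeasurable X P) :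
    AntitoneOn (fun β ↦ VaR P β X) (Ioo 0 1) := by
  intro β hβ γ hγ hβγ
  have hβ_le := (VaR_le_iff hX hβ _).1 le_rfl
  exact (VaR_le_iff hX hγ _).2 (by linarith)

theorem aemeasurable_VaR (hX : AEMeasurable X P) :
    AEMeasurable (fun β ↦ VaR P β X) (volume.restrict (Ioo 0 1)) :=
  aemeasurable_restrict_of_antitoneOn measurableSet_Ioo (antitoneOn_VaR hX)

theorem ae_le_iff_forall_VaR_le (hX : AEMeasurable X P) {c : ℝ} :
    (∀ᵐ ω ∂P, X ω ≤ c) ↔ ∀ β ∈ Ioo (0 : ℝ) 1, VaR P β X ≤ c := by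
  have ae_iff : (∀ᵐ ω ∂P, X ω ≤ c) ↔ 1 ≤ P.real {ω | X ω ≤ c} := by
    rw [measureReal_le_one.ge_iff_eq, measureReal_def, ENNReal.toReal_eq_one_iff]
    exact mem_ae_iff_prob_eq_one₀ (nullMeasurableSet_le hX aemeasurable_const)
  rw [ae_iff]
  constructor
  · intro h β hβ
    exact (VaR_le_iff hX hβ c).2 (by linarith [hβ.1])
  · intro h
    by_contra! hlt
    obtain ⟨r, hlt_r, hr⟩ := exists_between hlt
    have hβ : 1 - r ∈ Ioo (0 : ℝ) 1 := Ioo.one_sub_mem ⟨measureReal_nonneg.trans_lt hlt_r, hr⟩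
    linarith [(VaR_le_iff hX hβ c).1 (h _ hβ)]

theorem identDistrib_VaR (hX : AEMeasurable X P) :
    IdentDistrib (fun β ↦ VaR P β X) X (volume.restrict (Ioo 0 1)) P where
  aemeasurable_fst := aemeasurable_VaR hX
  aemeasurable_snd := hX
  map_eq := by
    refine Measure.ext_of_Iic _ _ fun x ↦ ?_
    have preimage_eq : (fun β ↦ VaR P β X) ⁻¹' Iic x ∩ Ioo 0 1
        = Ici (1 - P.real {ω | X ω ≤ x}) ∩ Ioo 0 1 := by
      ext β
      refine and_congr_left fun hβ ↦ ?_
      rw [mem_preimage, mem_Iic, VaR_le_iff hX hβ, mem_Ici, sub_le_comm]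
    rw [Measure.map_apply_of_aemeasurable (aemeasurable_VaR hX) measurableSet_Iic,
      Measure.restrict_apply' measurableSet_Ioo, preimage_eq,
      volume_Ici_inter_Ioo (sub_nonneg.2 measureReal_le_one), sub_sub_cancel,
      ofReal_measureReal, Measure.map_apply_of_aemeasurable hX measurableSet_Iic]
    rfl

theorem integrableOn_VaR (hX : Integrable X P) {β : ℝ} (hβ : β ≤ 1) :
    IntegrableOn (fun γ ↦ VaR P γ X) (Ioo 0 β) :=
  IntegrableOn.mono_set ((identDistrib_VaR hX.aemeasurable).integrable_iff.2 hX)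
    (Ioo_subset_Ioo_right hβ)

theorem VaR_le_ES (hX : Integrable X P) {β : ℝ} (hβ : β ∈ Ioo (0 : ℝ) 1) :
    VaR P β X ≤ ES P β X := by
  obtain ⟨γ, hγ, hγ_le⟩ :=
    exists_le_setAverage (by simpa using hβ.1) (by simp) (integrableOn_VaR hX hβ.2.le)
  calc VaR P β X ≤ VaR P γ X :=
        antitoneOn_VaR hX.aemeasurable ⟨hγ.1, hγ.2.trans hβ.2⟩ hβ hγ.2.le
    _ ≤ ES P β X := hγ_le.trans_eq (ES_eq_setAverage hβ.1).symm

theorem ES_le_of_forall_VaR_le (hX : Integrable X P) {β c : ℝ} (hβ : β ∈ Ioc (0 : ℝ) 1)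
    (h : ∀ γ ∈ Ioo 0 β, VaR P γ X ≤ c) : ES P β X ≤ c := by
  obtain ⟨γ, hγ, hγ_ge⟩ :=
    exists_setAverage_le (by simpa using hβ.1) (by simp) (integrableOn_VaR hX hβ.2)
  exact (ES_eq_setAverage hβ.1).trans_le (hγ_ge.trans (h γ hγ))

theorem frequently_ES_le_iff_ae_le (hX : Integrable X P) {c : ℝ} :
    (∃ᶠ β in 𝓝[>] 0, ES P β X ≤ c) ↔ ∀ᵐ ω ∂P, X ω ≤ c := by
  rw [ae_le_iff_forall_VaR_le hX.aemeasurable]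
  constructor
  · intro h γ hγ
    obtain ⟨β, hES, hβ⟩ := (h.and_eventually (Ioo_mem_nhdsGT hγ.1)).exists
    have hβ' : β ∈ Ioo (0 : ℝ) 1 := ⟨hβ.1, hβ.2.trans hγ.2⟩
    calc VaR P γ X ≤ VaR P β X := antitoneOn_VaR hX.aemeasurable hβ' hγ hβ.2.le
      _ ≤ ES P β X := VaR_le_ES hX hβ'
      _ ≤ c := hES
  · refine fun h ↦ Eventually.frequently ?_
    filter_upwards [Ioo_mem_nhdsGT one_pos] with β hβ
    exact ES_le_of_forall_VaR_le hX (Ioo_subset_Ioc_self hβ)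
      fun γ hγ ↦ h γ ⟨hγ.1, hγ.2.trans hβ.2⟩

end DQ

open DQ in
theorem stmt4_general {Ω : Type*} [MeasurableSpace Ω] (P : Measure Ω) [IsProbabilityMeasure P]
    (n : ℕ) (X : Fin n → Ω → ℝ) (hint : ∀ i, Integrable (X i) P) (α : ℝ)
    (hα : α ∈ Set.Ioo (0 : ℝ) 1) :
    DQES P α X = 0 ↔ ∀ᵐ ω ∂P, (∑ i, X i ω) ≤ ∑ i, ES P α (X i) := by
  have hsum : Integrable (fun ω ↦ ∑ i, X i ω) P := integrable_finsetSum _ fun i _ ↦ hint i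
  rw [DQES, div_eq_zero_iff, or_iff_left hα.1.ne', alphaStarES,
    sInf_Ioo_sep_union_one_eq_zero_iff, frequently_ES_le_iff_ae_le hsum]

open DQ in
/-- DQ^ES_α(X) = 0 if and only if X₁ + ⋯ + Xₙ ≤ ∑ᵢ ES_α(Xᵢ) almost surely. -/
theorem stmt4 {Ω : Type*} [MeasurableSpace Ω] (P : Measure Ω) [IsProbabilityMeasure P]
    (hP : Atomless P) (n : ℕ) (X : Fin n → Ω → ℝ) (hX : ∀ i, Measurable (X i))
    (hint : ∀ i, Integrable (X i) P) (α : ℝ) (hα : α ∈ Set.Ioo (0 : ℝ) 1) :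
    DQES P α X = 0 ↔ ∀ᵐ ω ∂P, (∑ i, X i ω) ≤ ∑ i, ES P α (X i) :=
  stmt4_general P n X hint α hα
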